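/- Let Γ be a finite simple graph with no central vertices, let (G_v) be a family of nontrivial groups indexed by the vertices of Γ, and let 𝒢 = 𝒢(Γ, {G_v}) be the associated graph product. Let N be a finitely generated full normal subgroup of 𝒢. Then 𝒢/N is both abelian-by-finite and finite-by-abelian. -/

import Mathlib

/-- The set of defining relators of the graph product: commutators of elements of
vertex groups attached to adjacent vertices. -/
def graphProductRels {V : Type} (Γ : SimpleGraph V) (G : V → Type)
    [∀ v, Group (G v)] : Subgroup (Monoid.CoprodI G) :=
  Subgroup.normalClosure
    { x | ∃ (v w : V) (g : G v) (h : G w), Γ.Adj v w ∧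
        x = Monoid.CoprodI.of g * Monoid.CoprodI.of h *
              (Monoid.CoprodI.of g)⁻¹ * (Monoid.CoprodI.of h)⁻¹ }

instance graphProductRels.normal {V : Type} (Γ : SimpleGraph V) (G : V → Type)
    [∀ v, Group (G v)] : (graphProductRels Γ G).Normal :=
  Subgroup.normalClosure_normal

/-- The graph product of the groups `G v` over the simple graph `Γ`. -/
abbrev GraphProduct {V : Type} (Γ : SimpleGraph V) (G : V → Type)
    [∀ v, Group (G v)] : Type :=
  Monoid.CoprodI G ⧸ graphProductRels Γ G

/-- The subgroup `𝒢(Δ)` of the graph product generated by the images of the vertex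
groups attached to the vertices in the set `S`. -/
def vertexSubgroup {V : Type} (Γ : SimpleGraph V) (G : V → Type)
    [∀ v, Group (G v)] (S : Set V) : Subgroup (GraphProduct Γ G) :=
  Subgroup.closure
    { x | ∃ v ∈ S, ∃ g : G v,
        x = (QuotientGroup.mk (Monoid.CoprodI.of g) : GraphProduct Γ G) }

/-- A set of vertices `S` is a join of two (nonempty) subgraphs if it can be split into
two nonempty pieces every two vertices of which (one from each piece) are adjacent. -/
def IsJoinOfTwo {V : Type} (Γ : SimpleGraph V) (S : Set V) : Prop :=
  ∃ A B : Set V, A.Nonempty ∧ B.Nonempty ∧ Disjoint A B ∧ A ∪ B = S ∧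
    ∀ a ∈ A, ∀ b ∈ B, Γ.Adj a b

/-- `P : Fin k → Set V` is a join decomposition of `Γ` into join-indecomposable pieces:
the pieces are nonempty, partition the vertices, any two vertices in distinct pieces are
adjacent, and no piece is itself a join of two nonempty subgraphs. -/
def IsJoinDecomposition {V : Type} (Γ : SimpleGraph V) {k : ℕ} (P : Fin k → Set V) : Prop :=
  (∀ i, (P i).Nonempty) ∧ (∀ v : V, ∃! i, v ∈ P i) ∧
    (∀ i j, i ≠ j → ∀ a ∈ P i, ∀ b ∈ P j, Γ.Adj a b) ∧
    (∀ i, ¬ IsJoinOfTwo Γ (P i))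

/-- A subgroup `N` of the graph product is full if for a join decomposition of `Γ` into
join-indecomposable pieces `Γ_1, …, Γ_k`, `N` intersects each `𝒢(Γ_i)` nontrivially. -/
def IsFullSubgroup {V : Type} (Γ : SimpleGraph V) (G : V → Type)
    [∀ v, Group (G v)] (N : Subgroup (GraphProduct Γ G)) : Prop :=
  ∀ (k : ℕ) (P : Fin k → Set V), IsJoinDecomposition Γ P →
    ∀ i, N ⊓ vertexSubgroup Γ G (P i) ≠ ⊥

/-- A vertex is central if it is adjacent to every other vertex. -/
def IsCentralVertex {V : Type} (Γ : SimpleGraph V) (v : V) : Prop :=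
  ∀ w : V, w ≠ v → Γ.Adj v w

/-- A group is abelian-by-finite if it has an abelian normal subgroup of finite index. -/
def AbelianByFinite (Q : Type) [Group Q] : Prop :=
  ∃ A : Subgroup Q, A.Normal ∧ A.FiniteIndex ∧ ∀ x y : A, x * y = y * x

/-- A group is finite-by-abelian if it has a finite normal subgroup with abelian quotient,
equivalently a finite normal subgroup containing all commutators. -/
def FiniteByAbelian (Q : Type) [Group Q] : Prop :=
  ∃ F : Subgroup Q, F.Normal ∧ Finite F ∧ ∀ x y : Q, x * y * x⁻¹ * y⁻¹ ∈ F

/-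
Fix a vertex `v`, and let `L` be the subgroup generated by the vertex groups of the neighbours of
`v`. A reduced expression of an element can be made to begin with a letter of `G v` in at most one
way; the elements for which there is no such letter form a set `E`. In the Cayley graph with respect
to the elements of the vertex groups, `E` and its complement are connected and separated by edges
at `L`: they are the two sides of an edge in the Bass–Serre tree of the splitting of the graph
product as `𝒢(Γ ∖ v) *_L (L × G v)`. If a normal subgroup `N` is not contained in `L`, it contains
a translation along an axis crossing that edge, so every coset of `N` meets both sides. If `N` is
moreover finitely generated, every coset of `N` has an element at bounded distance from `L`, so
`L ⊔ N` has finite index. As `L` centralizes `G v`, the image of `G v` in the quotient by `N` has a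
centralizer of finite index; intersecting over all vertices, the centre of the quotient has finite
index, and Schur's theorem applies.

If `N` were contained in `L`, conjugation by letters would show the same for every vertex not
adjacent to `v`, and hence for all vertices of the join factor of `v`. This contradicts fullness,
since an element of the subgroup generated by the vertex groups of a join factor is trivial if it
lies in the subgroup generated by the neighbours of each vertex of that factor.
-/

open Monoid SimpleGraph

section Cosets

variable {𝒢 : Type*} [Group 𝒢]

theorem finiteIndex_of_exists_inv_mul_mem {H : Subgroup 𝒢} {P : Set 𝒢} (hP : P.Finite)
    (h : ∀ g, ∃ p ∈ P, p⁻¹ * g ∈ H) : H.FiniteIndex := by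
  have := hP.to_subtype
  have hsurj : Function.Surjective fun p : P ↦ (p : 𝒢 ⧸ H) := fun q ↦ by
    obtain ⟨g, rfl⟩ := QuotientGroup.mk_surjective q
    obtain ⟨p, hp, hpg⟩ := h g
    exact ⟨⟨p, hp⟩, QuotientGroup.eq.2 hpg⟩
  have := Finite.of_surjective _ hsurj
  exact Subgroup.finiteIndex_of_finite_quotient

theorem iff_one_of_forall_mul_iff {S : Set 𝒢} {p : 𝒢 → Prop}
    (h : ∀ m ∈ Subgroup.closure S, ∀ t ∈ S, p m ↔ p (m * t)) :
    ∀ m ∈ Subgroup.closure S, p m ↔ p 1 := fun m hm ↦ by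
  induction hm using Subgroup.closure_induction_right with
  | one => rfl
  | mul_right x hx t ht ih => rw [← h x hx t ht, ih]
  | mul_inv_cancel x hx t ht ih =>
    rw [h _ (mul_mem hx (inv_mem (Subgroup.subset_closure ht))) t ht, inv_mul_cancel_right, ih]

end Cosets

section CayleyGraph

theorem mulCayley_preconnected {𝒢 : Type*} [Group 𝒢] {s : Set 𝒢}
    (hs : Subgroup.closure s = ⊤) : (mulCayley s).Preconnected := by
  have reachable_mul : ∀ x, ∀ t ∈ s, (mulCayley s).Reachable x (x * t) := fun x t ht ↦ by
    obtain h | h := eq_or_ne x (x * t)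
    · rw [← h]
    · exact Adj.reachable ((mulCayley_adj' s _ _).2 ⟨h, t, ht, .inl rfl⟩)
  have reachable_one : ∀ g ∈ Subgroup.closure s, (mulCayley s).Reachable 1 g := fun g hg ↦ by
    induction hg using Subgroup.closure_induction_right with
    | one => rfl
    | mul_right x _ t ht ih => exact ih.trans (reachable_mul x t ht)
    | mul_inv_cancel x _ t ht ih =>
      exact ih.trans (by simpa using (reachable_mul (x * t⁻¹) t ht).symm)
  simp only [hs, Subgroup.mem_top, forall_const] at reachable_one
  exact fun x y ↦ (reachable_one x).symm.trans (reachable_one y)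

theorem preconnected_induce_of_retraction {V : Type*} {C : SimpleGraph V} (hC : C.Preconnected)
    {E : Set V} (r : V → V) (hrE : ∀ x, r x ∈ E) (hr : ∀ x ∈ E, r x = x)
    (hadj : ∀ ⦃x y⦄, C.Adj x y → r x = r y ∨ C.Adj (r x) (r y)) : (C.induce E).Preconnected := by
  have reachable (x y : V) : (C.induce E).Reachable ⟨r x, hrE x⟩ ⟨r y, hrE y⟩ := by
    induction (reachable_iff_reflTransGen _ _).1 (hC x y) with
    | refl => rfl
    | @tail y z _ hyz ih =>
      refine ih.trans ?_
      obtain h | h := hadj hyz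
      · exact (Subtype.ext h : (⟨r y, hrE y⟩ : E) = ⟨r z, hrE z⟩) ▸ .rfl
      · exact Adj.reachable (comap_adj.2 h)
  rintro ⟨x, hx⟩ ⟨y, hy⟩
  have hxy := reachable x y
  simp only [hr x hx, hr y hy] at hxy
  exact hxy

end CayleyGraph

section HalfSpace

variable {𝒢 : Type*} [Group 𝒢]

/-- A subset `E` of a group is a half-space of the Cayley graph with respect to `s`, bounded by
the subgroup `L`, if both `E` and its complement are connected and every edge leaving `E` starts
in `L`. It contains `1`, is stable under right multiplication by `L`, and an edge leaves it
at `1`. -/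
structure IsHalfSpace (s : Set 𝒢) (L : Subgroup 𝒢) (E : Set 𝒢) : Prop where
  one_mem : (1 : 𝒢) ∈ E
  mul_right_mem : ∀ ⦃x c⦄, x ∈ E → c ∈ L → x * c ∈ E
  preconnected : ((mulCayley s).induce E).Preconnected
  preconnected_compl : ((mulCayley s).induce Eᶜ).Preconnected
  mem_of_adj : ∀ ⦃x y⦄, (mulCayley s).Adj x y → x ∈ E → y ∉ E → x ∈ L
  exists_adj_one : ∃ b, (mulCayley s).Adj 1 b ∧ b ∉ E

/-- A translation skewers `E` if it maps the complement of `E` into itself and moves `1` out of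
`E`; its powers then run from deep inside `E` to deep inside the complement. -/
structure Skewers (n : 𝒢) (E : Set 𝒢) : Prop where
  notMem : n ∉ E
  mapsTo : ∀ ⦃x⦄, x ∉ E → n * x ∉ E

namespace IsHalfSpace

variable {s : Set 𝒢} {L : Subgroup 𝒢} {E : Set 𝒢}

theorem mem_of_mem_subgroup (hE : IsHalfSpace s L E) {c : 𝒢} (hc : c ∈ L) : c ∈ E :=
  one_mul c ▸ hE.mul_right_mem hE.one_mem hc

theorem mem_of_mul_mem (hE : IsHalfSpace s L E) {x c : 𝒢} (hx : x * c ∈ E) (hc : c ∈ L) :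
    x ∈ E := by
  simpa using hE.mul_right_mem hx (inv_mem hc)

theorem inv_mem_iff_of_mul_mem (hE : IsHalfSpace s L E) {m x : 𝒢} (h : m * x ∈ L) :
    m⁻¹ ∈ E ↔ x ∈ E := by
  have hx : x = m⁻¹ * (m * x) := (inv_mul_cancel_left m x).symm
  exact ⟨fun hm ↦ hx ▸ hE.mul_right_mem hm h, fun hxE ↦ hE.mem_of_mul_mem (hx ▸ hxE) h⟩

theorem mem_or_mem_of_adj (hE : IsHalfSpace s L E) {x y : 𝒢} (hxy : (mulCayley s).Adj x y)
    (h : ¬(x ∈ E ↔ y ∈ E)) : x ∈ L ∨ y ∈ L := by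
  by_cases hx : x ∈ E
  · exact .inl (hE.mem_of_adj hxy hx fun hy ↦ h (iff_of_true hx hy))
  · exact .inr (hE.mem_of_adj hxy.symm (by tauto) hx)

theorem mul_mem_iff_of_adj (hE : IsHalfSpace s L E) {m x y : 𝒢}
    (hxy : (mulCayley s).Adj x y) (hx : m * x ∉ L) (hy : m * y ∉ L) :
    m * x ∈ E ↔ m * y ∈ E := by
  by_contra h
  exact (hE.mem_or_mem_of_adj (mulCayley_adj_mul_iff_right.2 hxy) h).elim hx hy

theorem mul_mem_iff_of_preconnected (hE : IsHalfSpace s L E) {A : Set 𝒢}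
    (hA : ((mulCayley s).induce A).Preconnected) {m : 𝒢} (hm : ∀ y ∈ A, m * y ∉ L)
    {x y : 𝒢} (hx : x ∈ A) (hy : y ∈ A) : m * x ∈ E ↔ m * y ∈ E := by
  have hxy := (reachable_iff_reflTransGen _ _).1 (hA ⟨x, hx⟩ ⟨y, hy⟩)
  suffices ∀ z : A, Relation.ReflTransGen ((mulCayley s).induce A).Adj ⟨x, hx⟩ z →
      (m * x ∈ E ↔ m * z ∈ E) from this ⟨y, hy⟩ hxy
  intro z hz
  induction hz with
  | refl => rfl
  | tail _ h ih => exact ih.trans (hE.mul_mem_iff_of_adj h (hm _ (Subtype.prop _))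
      (hm _ (Subtype.prop _)))

theorem mul_mem_iff_of_mem (hE : IsHalfSpace s L E) {m x : 𝒢} (hm : m⁻¹ ∉ E) (hx : x ∈ E) :
    m * x ∈ E ↔ m ∈ E := by
  have h := hE.mul_mem_iff_of_preconnected hE.preconnected (m := m)
    (fun y hy hmy ↦ hm ((hE.inv_mem_iff_of_mul_mem hmy).2 hy)) hx hE.one_mem
  rwa [mul_one] at h

theorem mul_mem_iff_of_notMem (hE : IsHalfSpace s L E) {m x : 𝒢} (hmL : m ∉ L) (hm : m⁻¹ ∈ E)
    (hx : x ∉ E) : m * x ∈ E ↔ m ∈ E := by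
  obtain ⟨b, hb, hbE⟩ := hE.exists_adj_one
  have hmL' : ∀ y ∈ Eᶜ, m * y ∉ L := fun y hy hmy ↦ hy ((hE.inv_mem_iff_of_mul_mem hmy).1 hm)
  have h1 := hE.mul_mem_iff_of_adj (m := m) hb (by rwa [mul_one]) (hmL' b hbE)
  rw [mul_one] at h1
  exact (hE.mul_mem_iff_of_preconnected hE.preconnected_compl hmL' hx hbE).trans h1.symm

theorem skewers_mul_conj (hE : IsHalfSpace s L E) {m h : 𝒢} (hm : m ∉ E) (hm' : m⁻¹ ∉ E)
    (hhL : h ∉ L) (hh : h ∈ E) (hh' : h⁻¹ ∈ E) : Skewers (m * (h * m * h⁻¹)) E := by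
  -- `m` maps `E` into `Eᶜ` while `h` and `h⁻¹` map `Eᶜ` into `E`: like two reflections, `m` and
  -- its conjugate by `h` compose to a translation.
  have key : ∀ x, h⁻¹ * x ∈ E → m * (h * m * h⁻¹) * x ∉ E := fun x hx ↦ by
    have h₁ : m * (h⁻¹ * x) ∉ E := mt (hE.mul_mem_iff_of_mem hm' hx).1 hm
    have h₂ : h * (m * (h⁻¹ * x)) ∈ E := (hE.mul_mem_iff_of_notMem hhL hh' h₁).2 hh
    have h₃ : m * (h * (m * (h⁻¹ * x))) ∉ E := mt (hE.mul_mem_iff_of_mem hm' h₂).1 hm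
    simpa only [mul_assoc] using h₃
  refine ⟨?_, fun x hx ↦ key x ?_⟩
  · simpa only [mul_one] using key 1 (by rwa [mul_one])
  · exact (hE.mul_mem_iff_of_notMem (mt inv_mem_iff.1 hhL) (by rwa [inv_inv]) hx).2 hh'

theorem conj_notMem (hE : IsHalfSpace s L E) {m b : 𝒢} (hmL : m ∉ L) (hm : m ∈ E)
    (hm' : m⁻¹ ∈ E) (hb : b ∉ E) (hb' : b⁻¹ ∉ E) : b * m * b⁻¹ ∉ E := by
  have h : m * b⁻¹ ∈ E := (hE.mul_mem_iff_of_notMem hmL hm' hb').2 hm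
  rw [mul_assoc]
  exact mt (hE.mul_mem_iff_of_mem hb' h).1 hb

theorem skewers_of_inv_mem (hE : IsHalfSpace s L E) {m : 𝒢} (hm : m ∉ E) (hm' : m⁻¹ ∈ E) :
    Skewers m E :=
  ⟨hm, fun _ hx ↦ mt (hE.mul_mem_iff_of_notMem (mt hE.mem_of_mem_subgroup hm) hm' hx).1 hm⟩

theorem exists_skewers (hE : IsHalfSpace s L E) {h b : 𝒢} (hhL : h ∉ L) (hh : h ∈ E)
    (hh' : h⁻¹ ∈ E) (hb : b ∉ E) (hb' : b⁻¹ ∉ E) {N : Subgroup 𝒢} (hN : N.Normal)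
    (hNL : ¬N ≤ L) : ∃ n ∈ N, Skewers n E := by
  have of_flip : ∀ m ∈ N, m ∉ E → m⁻¹ ∉ E → ∃ n ∈ N, Skewers n E := fun m hm hmE hmE' ↦
    ⟨_, mul_mem hm (hN.conj_mem m hm h), hE.skewers_mul_conj hmE hmE' hhL hh hh'⟩
  obtain ⟨m, hm, hmL⟩ := SetLike.not_le_iff_exists.1 hNL
  by_cases hmE : m ∈ E <;> by_cases hmE' : m⁻¹ ∈ E
  · refine of_flip _ (hN.conj_mem m hm b) (hE.conj_notMem hmL hmE hmE' hb hb') ?_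
    rw [conj_inv]
    exact hE.conj_notMem (mt inv_mem_iff.1 hmL) hmE' (by rwa [inv_inv]) hb hb'
  · exact ⟨m⁻¹, inv_mem hm, hE.skewers_of_inv_mem hmE' (by rwa [inv_inv])⟩
  · exact ⟨m, hm, hE.skewers_of_inv_mem hmE hmE'⟩
  · exact of_flip m hm hmE hmE'

theorem zpow_mem_iff (hE : IsHalfSpace s L E) {n : 𝒢} (hn : Skewers n E) {k : ℤ} :
    n ^ k ∈ E ↔ k ≤ 0 := by
  have pow_mul_notMem : ∀ (j : ℕ) {x}, x ∉ E → n ^ j * x ∉ E := fun j ↦ by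
    induction j with
    | zero => simp
    | succ j ih => exact fun hx ↦ by simpa only [pow_succ, mul_assoc] using ih (hn.mapsTo hx)
  refine ⟨fun hk ↦ not_lt.1 fun hk₀ ↦ ?_, fun hk ↦ by_contra fun h ↦ ?_⟩
  · lift k to ℕ using hk₀.le
    obtain ⟨j, rfl⟩ := Nat.exists_eq_succ_of_ne_zero (Int.natCast_pos.1 hk₀).ne'
    exact pow_mul_notMem j hn.notMem (by rwa [← pow_succ, ← zpow_natCast])
  · obtain ⟨j, rfl⟩ := Int.exists_eq_neg_ofNat hk
    exact pow_mul_notMem j h (by simpa using hE.one_mem)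

theorem zpow_notMem (hE : IsHalfSpace s L E) {n : 𝒢} (hn : Skewers n E) {k : ℤ} (hk : k ≠ 0) :
    n ^ k ∉ L := fun h ↦ by
  have h₁ := (hE.zpow_mem_iff hn).1 (hE.mem_of_mem_subgroup h)
  have h₂ := (hE.zpow_mem_iff (k := -k) hn).1
    (zpow_neg n k ▸ hE.mem_of_mem_subgroup (inv_mem h))
  omega

theorem exists_finite_crossing (hE : IsHalfSpace s L E) (hs : (mulCayley s).Preconnected)
    (x y : 𝒢) : ∃ P : Set 𝒢, P.Finite ∧
      ∀ g, ¬(g * x ∈ E ↔ g * y ∈ E) → ∃ p ∈ P, g * p ∈ L := by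
  have hxy := (reachable_iff_reflTransGen _ _).1 (hs x y)
  induction hxy with
  | refl => exact ⟨∅, Set.finite_empty, fun g h ↦ (h Iff.rfl).elim⟩
  | @tail y z _ hyz ih =>
    obtain ⟨P, hP, hcross⟩ := ih
    refine ⟨insert y (insert z P), (hP.insert z).insert y, fun g hg ↦ ?_⟩
    by_cases hxy : g * x ∈ E ↔ g * y ∈ E
    · have hgyz := mulCayley_adj_mul_iff_right (d := g) |>.2 hyz
      rw [hxy] at hg
      obtain h | h := hE.mem_or_mem_of_adj hgyz hg
      · exact ⟨y, Set.mem_insert .., h⟩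
      · exact ⟨z, Set.mem_insert_of_mem _ (Set.mem_insert ..), h⟩
    · obtain ⟨p, hp, h⟩ := hcross g hxy
      exact ⟨p, Set.mem_insert_of_mem _ (Set.mem_insert_of_mem _ hp), h⟩

theorem finite_setOf_zpow_mul_mem (hE : IsHalfSpace s L E) {n : 𝒢} (hn : Skewers n E)
    (p : 𝒢) : {k : ℤ | n ^ k * p ∈ L}.Finite := by
  refine Set.Subsingleton.finite fun j hj k hk ↦ by_contra fun hjk ↦ ?_
  refine hE.zpow_notMem hn (sub_ne_zero.2 hjk) ?_
  simpa [zpow_sub, mul_assoc] using mul_mem hj (inv_mem (Set.mem_ofPred.1 hk))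

theorem finite_setOf_zpow_mul_crossing (hE : IsHalfSpace s L E)
    (hs : (mulCayley s).Preconnected) {n : 𝒢} (hn : Skewers n E) (g : 𝒢) :
    {k : ℤ | ¬(n ^ k * g ∈ E ↔ k ≤ 0)}.Finite := by
  obtain ⟨P, hP, hcross⟩ := hE.exists_finite_crossing hs g 1
  refine (hP.biUnion fun p _ ↦ hE.finite_setOf_zpow_mul_mem hn p).subset fun k hk ↦ ?_
  rw [Set.mem_ofPred, ← hE.zpow_mem_iff hn, ← mul_one (n ^ k), mul_assoc, one_mul] at hk
  simpa only [Set.mem_iUnion, Set.mem_ofPred, exists_prop] using hcross _ hk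

theorem exists_zpow_mul_mem_and_notMem (hE : IsHalfSpace s L E)
    (hs : (mulCayley s).Preconnected) {n : 𝒢} (hn : Skewers n E) (g : 𝒢) :
    (∃ k : ℤ, n ^ k * g ∈ E) ∧ ∃ k : ℤ, n ^ k * g ∉ E := by
  have hfin := hE.finite_setOf_zpow_mul_crossing hs hn g
  obtain ⟨j, hj, hjE⟩ := (Set.Iic_infinite (0 : ℤ)).exists_notMem_finite hfin
  obtain ⟨k, hk, hkE⟩ := (Set.Ioi_infinite (0 : ℤ)).exists_notMem_finite hfin
  exact ⟨⟨j, (not_not.1 hjE).2 hj⟩, ⟨k, fun h ↦ (not_le.2 hk) ((not_not.1 hkE).1 h)⟩⟩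

theorem finiteIndex_sup (hE : IsHalfSpace s L E) (hs : (mulCayley s).Preconnected)
    {N : Subgroup 𝒢} (hN : N.Normal) (hfg : N.FG) {n : 𝒢} (hnN : n ∈ N) (hn : Skewers n E) :
    (L ⊔ N).FiniteIndex := by
  obtain ⟨S, rfl⟩ := hfg
  choose P hP hcross using hE.exists_finite_crossing hs 1
  have hPfin : (⋃ t ∈ S, P t).Finite := S.finite_toSet.biUnion fun t _ ↦ hP t
  refine finiteIndex_of_exists_inv_mul_mem hPfin fun g ↦ ?_
  -- `g⁻¹ * N` meets both sides of `E` since it contains `n ^ k * g⁻¹` for all `k`.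
  obtain ⟨m, hm, t, ht, hmt⟩ : ∃ m ∈ Subgroup.closure (S : Set 𝒢), ∃ t ∈ S,
      ¬(g⁻¹ * m ∈ E ↔ g⁻¹ * (m * t) ∈ E) := by
    obtain ⟨⟨j, hj⟩, k, hk⟩ := hE.exists_zpow_mul_mem_and_notMem hs hn g⁻¹
    have hzpow (i : ℤ) : n ^ i * g⁻¹ = g⁻¹ * (g * n ^ i * g⁻¹) := by group
    have hconj (i : ℤ) := hN.conj_mem _ (zpow_mem hnN i) g
    by_contra! h
    have hconst := iff_one_of_forall_mul_iff (p := (g⁻¹ * · ∈ E)) h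
    rw [hzpow, hconst _ (hconj _)] at hj hk
    exact hk hj
  rw [← mul_assoc] at hmt
  obtain ⟨p, hp, hpL⟩ := hcross t (g⁻¹ * m) (by rwa [mul_one])
  refine ⟨p, Set.mem_biUnion ht hp, ?_⟩
  have hpg : p⁻¹ * g = (g⁻¹ * m * p)⁻¹ * (g⁻¹ * m * g) := by group
  rw [hpg]
  exact Subgroup.mul_mem_sup (inv_mem hpL) (hN.conj_mem' m hm g)

theorem finiteIndex_sup_of_not_le (hE : IsHalfSpace s L E) (hs : (mulCayley s).Preconnected)
    {h b : 𝒢} (hhL : h ∉ L) (hh : h ∈ E) (hh' : h⁻¹ ∈ E) (hb : b ∉ E) (hb' : b⁻¹ ∉ E)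
    {N : Subgroup 𝒢} (hN : N.Normal) (hfg : N.FG) (hNL : ¬N ≤ L) : (L ⊔ N).FiniteIndex := by
  obtain ⟨n, hnN, hn⟩ := hE.exists_skewers hhL hh hh' hb hb' hN hNL
  exact hE.finiteIndex_sup hs hN hfg hnN hn

end IsHalfSpace
end HalfSpace

section FreeProduct

variable {ι : Type*} {M : ι → Type*} [∀ i, Group (M i)]

open Classical in
/-- The leading letter of an element of a free product in the factor `j`, that is, the first
letter of its reduced word if that letter lies in `M j`, and `1` otherwise. -/
noncomputable def coprodHead (j : ι) (k : CoprodI M) : M j :=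
  (CoprodI.Word.equivPair j (CoprodI.Word.equiv k)).head

theorem coprodHead_of_mul (j : ι) (a : M j) (k : CoprodI M) :
    coprodHead j (CoprodI.of a * k) = a * coprodHead j k := by
  classical
  have h : CoprodI.Word.equiv (CoprodI.of a * k) = CoprodI.of a • CoprodI.Word.equiv k := by
    simp [CoprodI.Word.equiv, mul_smul]
  rw [coprodHead, h, CoprodI.Word.equivPair_smul_same, coprodHead]

theorem coprodHead_prod {j : ι} {w : CoprodI.Word M} (h : w.fstIdx ≠ some j) :
    coprodHead j w.prod = 1 := by
  classical
  have hw : CoprodI.Word.equiv w.prod = w := CoprodI.Word.equiv.apply_symm_apply w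
  rw [coprodHead, hw, CoprodI.Word.equivPair_eq_of_fstIdx_ne h]

theorem coprodHead_one (j : ι) : coprodHead j (1 : CoprodI M) = 1 :=
  coprodHead_prod (w := .empty) (Option.some_ne_none j).symm

theorem coprodHead_of (j : ι) (a : M j) : coprodHead j (CoprodI.of a) = a := by
  simpa only [mul_one, coprodHead_one] using coprodHead_of_mul j a 1

theorem exists_word_prod_eq (k : CoprodI M) : ∃ w : CoprodI.Word M, w.prod = k := by
  classical
  exact CoprodI.Word.equiv.symm.surjective k

theorem coprodHead_eq_one_of_ne {j l : ι} (hjl : j ≠ l) {k : CoprodI M}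
    (h : coprodHead l k ≠ 1) : coprodHead j k = 1 := by
  obtain ⟨w, rfl⟩ := exists_word_prod_eq k
  have hl : w.fstIdx = some l := not_not.1 (mt coprodHead_prod h)
  exact coprodHead_prod fun hj ↦ hjl (Option.some.inj (hj.symm.trans hl))

theorem coprodHead_of_of_ne {j l : ι} (hjl : j ≠ l) (m : M l) :
    coprodHead j (CoprodI.of m : CoprodI M) = 1 := by
  by_cases hm : m = 1
  · rw [hm, map_one, coprodHead_one]
  · exact coprodHead_eq_one_of_ne hjl (by rwa [coprodHead_of])

theorem exists_eq_of_of_coprodHead_mul_ne {i j : ι} {h : M i} {k : CoprodI M}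
    (hne : coprodHead j (k * CoprodI.of h) ≠ coprodHead j k) :
    i = j ∧ ∃ a : M j, k = CoprodI.of a := by
  obtain ⟨w, rfl⟩ := exists_word_prod_eq k
  induction w using CoprodI.Word.consRecOn generalizing j with
  | empty =>
    rw [CoprodI.Word.prod_empty, one_mul, coprodHead_one] at hne
    exact ⟨by_contra fun hij ↦ hne (coprodHead_of_of_ne (Ne.symm hij) h), 1, (map_one _).symm⟩
  | cons l m w hw hm ih =>
    rw [CoprodI.Word.prod_cons] at hne ⊢
    rw [mul_assoc] at hne
    obtain rfl | hjl := eq_or_ne j l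
    · rw [coprodHead_of_mul, coprodHead_of_mul] at hne
      obtain ⟨rfl, a, ha⟩ := ih (ne_of_apply_ne _ hne)
      exact ⟨rfl, m * a, by rw [ha, map_mul]⟩
    · have hw₁ : coprodHead l w.prod = 1 := coprodHead_prod hw
      have hj : coprodHead j (CoprodI.of m * w.prod) = 1 :=
        coprodHead_eq_one_of_ne hjl (by rwa [coprodHead_of_mul, hw₁, mul_one])
      rw [hj] at hne
      by_cases hl : coprodHead l (w.prod * CoprodI.of h) = 1
      · exact (hne (coprodHead_eq_one_of_ne hjl (by rwa [coprodHead_of_mul, hl, mul_one]))).elim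
      · obtain ⟨rfl, a, ha⟩ := ih (hw₁.symm ▸ hl)
        rw [ha, ← map_mul, ← map_mul] at hne
        exact (hne (coprodHead_of_of_ne hjl _)).elim

variable {A X Y Z H : Type*} [Group A] [Group H] [MulAction A X]

/-- The homomorphism between free products of copies of `H` which sends the copy of index `x`
to the copy of index `f x`. -/
def reindexFactors (H : Type*) [Group H] (f : X → Y) :
    CoprodI (fun _ : X ↦ H) →* CoprodI fun _ : Y ↦ H :=
  CoprodI.lift fun x ↦ CoprodI.of (M := fun _ : Y ↦ H) (i := f x)

theorem reindexFactors_of (f : X → Y) (x : X) (m : H) :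
    reindexFactors H f (CoprodI.of (M := fun _ ↦ H) (i := x) m) =
      CoprodI.of (M := fun _ ↦ H) (i := f x) m :=
  CoprodI.lift_of _ _

theorem reindexFactors_id : reindexFactors H (id : X → X) = MonoidHom.id _ :=
  CoprodI.lift_of'

theorem reindexFactors_comp (g : Y → Z) (f : X → Y) :
    (reindexFactors H g).comp (reindexFactors H f) = reindexFactors H (g ∘ f) :=
  CoprodI.ext_hom _ _ fun x ↦ by
    ext m
    simp only [MonoidHom.comp_apply, reindexFactors_of, Function.comp_apply]

/-- The action of `A` on the free product of copies of `H` indexed by `X` which permutes the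
copies as `A` permutes `X`. -/
def permuteFactors (A X H : Type*) [Group A] [Group H] [MulAction A X] :
    A →* MulAut (CoprodI fun _ : X ↦ H) where
  toFun a := MonoidHom.toMulEquiv (reindexFactors H (a • ·)) (reindexFactors H (a⁻¹ • ·))
    ((reindexFactors_comp _ _).trans <|
      (congrArg _ (funext (inv_smul_smul a))).trans reindexFactors_id)
    ((reindexFactors_comp _ _).trans <|
      (congrArg _ (funext (smul_inv_smul a))).trans reindexFactors_id)
  map_one' := MulEquiv.toMonoidHom_injective <|
    (congrArg _ (funext (one_smul A))).trans reindexFactors_id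
  map_mul' a b := MulEquiv.toMonoidHom_injective <|
    (congrArg _ (funext (mul_smul a b))).trans (reindexFactors_comp (a • ·) (b • ·)).symm

theorem permuteFactors_of (a : A) (x : X) (m : H) :
    permuteFactors A X H a (CoprodI.of (M := fun _ ↦ H) (i := x) m) =
      CoprodI.of (M := fun _ ↦ H) (i := a • x) m :=
  reindexFactors_of _ _ _

end FreeProduct

section Join

variable {V : Type} {Γ : SimpleGraph V}

theorem not_isJoinOfTwo_supp (C : Γᶜ.ConnectedComponent) : ¬IsJoinOfTwo Γ C.supp := by
  rintro ⟨A, B, ⟨a, ha⟩, ⟨b, hb⟩, hdisj, hunion, hadj⟩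
  have hab : Γᶜ.Reachable a b := C.reachable_of_mem_supp (hunion ▸ .inl ha) (hunion ▸ .inr hb)
  suffices b ∈ A from Set.disjoint_left.1 hdisj this hb
  rw [reachable_iff_reflTransGen] at hab
  clear hb
  induction hab with
  | refl => exact ha
  | @tail x y _ hxy hx =>
    have hy : y ∈ A ∪ B := hunion ▸ C.mem_supp_of_adj_mem_supp (hunion ▸ .inl hx) hxy
    exact hy.resolve_right fun hyB ↦ ((compl_adj _ _ _).1 hxy).2 (hadj x hx y hyB)

theorem isJoinDecomposition_supp (Γ : SimpleGraph V) {k : ℕ}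
    (e : Fin k ≃ Γᶜ.ConnectedComponent) : IsJoinDecomposition Γ fun i ↦ (e i).supp := by
  refine ⟨fun i ↦ (e i).nonempty_supp, fun v ↦ ?_, fun i j hij a ha b hb ↦ ?_,
    fun i ↦ not_isJoinOfTwo_supp (e i)⟩
  · simpa only [ConnectedComponent.mem_supp_iff, eq_comm] using
      e.bijective.existsUnique (Γᶜ.connectedComponentMk v)
  · have hne : Γᶜ.connectedComponentMk a ≠ Γᶜ.connectedComponentMk b := fun h ↦
      hij (e.injective (ha.symm.trans (h.trans hb)))
    by_contra hab
    exact hne (ConnectedComponent.connectedComponentMk_eq_of_adj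
      ((compl_adj _ _ _).2 ⟨ne_of_apply_ne _ hne, hab⟩))

end Join

section Center

open scoped commutatorElement

variable {Q : Type} [Group Q]

theorem abelianByFinite_of_finiteIndex_center [(Subgroup.center Q).FiniteIndex] :
    AbelianByFinite Q :=
  ⟨Subgroup.center Q, inferInstance, inferInstance, fun x y ↦
    Subtype.ext (Subgroup.mem_center_iff.1 y.2 x)⟩

theorem commutatorElement_mul_left_of_mem_center {c : Q}
    (hc : c ∈ Subgroup.center Q) (a b : Q) : ⁅a * c, b⁆ = ⁅a, b⁆ := by
  have hcb : c * b = b * c := (Subgroup.mem_center_iff.1 hc b).symm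
  calc ⁅a * c, b⁆ = a * (c * b) * c⁻¹ * a⁻¹ * b⁻¹ := by group
    _ = ⁅a, b⁆ := by rw [hcb]; group

theorem commutatorElement_out_out (a b : Q) :
    ⁅(a : Q ⧸ Subgroup.center Q).out, (b : Q ⧸ Subgroup.center Q).out⁆ = ⁅a, b⁆ := by
  obtain ⟨⟨c, hc⟩, ha⟩ := QuotientGroup.mk_out_eq_mul (Subgroup.center Q) a
  obtain ⟨⟨d, hd⟩, hb⟩ := QuotientGroup.mk_out_eq_mul (Subgroup.center Q) b
  rw [ha, hb, commutatorElement_mul_left_of_mem_center hc, ← commutatorElement_inv,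
    commutatorElement_mul_left_of_mem_center hd, commutatorElement_inv]

theorem finiteByAbelian_of_finiteIndex_center [(Subgroup.center Q).FiniteIndex] :
    FiniteByAbelian Q := by
  have : Finite (commutatorSet Q) := Set.Finite.subset (Set.finite_range
    fun p : (Q ⧸ Subgroup.center Q) × (Q ⧸ Subgroup.center Q) ↦ ⁅p.1.out, p.2.out⁆) <| by
      rintro _ ⟨a, b, rfl⟩
      exact ⟨(a, b), commutatorElement_out_out a b⟩
  exact ⟨commutator Q, inferInstance, inferInstance, fun x y ↦
    Subgroup.commutator_mem_commutator (Subgroup.mem_top x) (Subgroup.mem_top y)⟩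

end Center

namespace GraphProduct

section Basic

variable {V : Type} {Γ : SimpleGraph V} {G : V → Type} [∀ v, Group (G v)]

/-- The canonical homomorphism from a vertex group to the graph product. -/
def of (Γ : SimpleGraph V) {v : V} : G v →* GraphProduct Γ G :=
  (QuotientGroup.mk' (graphProductRels Γ G)).comp CoprodI.of

theorem commute_of {v w : V} (hvw : Γ.Adj v w) (a : G v) (b : G w) :
    Commute (of Γ a) (of Γ b) := by
  have h : CoprodI.of a * CoprodI.of b * (CoprodI.of a)⁻¹ * (CoprodI.of b)⁻¹ ∈
      graphProductRels Γ G := Subgroup.subset_normalClosure ⟨v, w, a, b, hvw, rfl⟩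
  rw [← QuotientGroup.eq_one_iff, ← commutatorElement_def] at h
  exact commutatorElement_eq_one_iff_commute.1 h

/-- The homomorphism from the graph product induced by homomorphisms from the vertex groups
such that the images of adjacent vertex groups commute. -/
def lift {H : Type*} [Group H] (f : ∀ v, G v →* H)
    (hf : ∀ v w, Γ.Adj v w → ∀ (a : G v) (b : G w), Commute (f v a) (f w b)) :
    GraphProduct Γ G →* H :=
  QuotientGroup.lift _ (CoprodI.lift f) <| Subgroup.normalClosure_le_normal <| by
    rintro _ ⟨v, w, a, b, hvw, rfl⟩
    simpa [← commutatorElement_def, commutatorElement_eq_one_iff_commute] using hf v w hvw a b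

theorem lift_of {H : Type*} [Group H] (f : ∀ v, G v →* H)
    (hf : ∀ v w, Γ.Adj v w → ∀ (a : G v) (b : G w), Commute (f v a) (f w b))
    {v : V} (a : G v) : lift f hf (of Γ a) = f v a :=
  CoprodI.lift_of f a

theorem hom_ext {H : Type*} [Group H] {f g : GraphProduct Γ G →* H}
    (h : ∀ (v : V) (a : G v), f (of Γ a) = g (of Γ a)) : f = g :=
  QuotientGroup.monoidHom_ext _ <| CoprodI.ext_hom _ _ fun v ↦ MonoidHom.ext (h v)

theorem of_mem_vertexSubgroup {S : Set V} {v : V} (hv : v ∈ S) (a : G v) :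
    of Γ a ∈ vertexSubgroup Γ G S :=
  Subgroup.subset_closure ⟨v, hv, a, rfl⟩

theorem vertexSubgroup_le {S : Set V} {K : Subgroup (GraphProduct Γ G)}
    (h : ∀ v ∈ S, ∀ a : G v, of Γ a ∈ K) : vertexSubgroup Γ G S ≤ K :=
  (Subgroup.closure_le K).2 <| by
    rintro _ ⟨v, hv, a, rfl⟩
    exact h v hv a

theorem vertexSubgroup_mono {S T : Set V} (h : S ⊆ T) :
    vertexSubgroup Γ G S ≤ vertexSubgroup Γ G T :=
  vertexSubgroup_le fun _ hv a ↦ of_mem_vertexSubgroup (h hv) a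

theorem vertexSubgroup_univ : vertexSubgroup Γ G Set.univ = ⊤ := by
  refine (Subgroup.eq_top_iff' _).2 fun g ↦ ?_
  obtain ⟨k, rfl⟩ := QuotientGroup.mk_surjective g
  induction k using CoprodI.induction_on with
  | one => exact one_mem _
  | of v a => exact of_mem_vertexSubgroup (Set.mem_univ v) a
  | mul x y hx hy => exact mul_mem hx hy

variable (Γ G) in
/-- The subgroup generated by the vertex groups of the neighbours of `v`. -/
abbrev linkSubgroup (v : V) : Subgroup (GraphProduct Γ G) :=
  vertexSubgroup Γ G (Γ.neighborSet v)

theorem commute_of_of_mem_linkSubgroup {v : V} (a : G v) {c : GraphProduct Γ G}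
    (hc : c ∈ linkSubgroup Γ G v) : Commute (of Γ a) c := by
  have h : linkSubgroup Γ G v ≤ Subgroup.centralizer {of Γ a} :=
    vertexSubgroup_le fun w hw b ↦
      Subgroup.mem_centralizer_singleton_iff.2 (commute_of hw a b).symm
  exact (Subgroup.mem_centralizer_singleton_iff.1 (h hc)).symm

open Classical in
/-- The retraction of the graph product onto `vertexSubgroup Γ G S` which kills the vertex groups
outside `S`. -/
noncomputable def retraction (Γ : SimpleGraph V) (G : V → Type) [∀ v, Group (G v)] (S : Set V) :
    GraphProduct Γ G →* GraphProduct Γ G :=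
  lift (fun v ↦ if v ∈ S then of Γ else 1) fun v w hvw a b ↦ by
    by_cases hv : v ∈ S <;> by_cases hw : w ∈ S <;> simp [hv, hw, commute_of hvw]

theorem retraction_of_mem {S : Set V} {v : V} (hv : v ∈ S) (a : G v) :
    retraction Γ G S (of Γ a) = of Γ a := by
  rw [retraction, lift_of, if_pos hv]

theorem retraction_of_notMem {S : Set V} {v : V} (hv : v ∉ S) (a : G v) :
    retraction Γ G S (of Γ a) = 1 := by
  rw [retraction, lift_of, if_neg hv, MonoidHom.one_apply]

theorem vertexSubgroup_inf_le (S T : Set V) :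
    vertexSubgroup Γ G S ⊓ vertexSubgroup Γ G T ≤ vertexSubgroup Γ G (S ∩ T) := by
  rintro m ⟨hS, hT⟩
  have hfix : vertexSubgroup Γ G T ≤ (retraction Γ G T).eqLocus (MonoidHom.id _) :=
    vertexSubgroup_le fun v hv a ↦ retraction_of_mem hv a
  have hmap : vertexSubgroup Γ G S ≤ (vertexSubgroup Γ G (S ∩ T)).comap (retraction Γ G T) :=
    vertexSubgroup_le fun v hv a ↦ Subgroup.mem_comap.2 <| by
      by_cases hvT : v ∈ T
      · rw [retraction_of_mem hvT]
        exact of_mem_vertexSubgroup (Set.mem_inter hv hvT) a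
      · rw [retraction_of_notMem hvT]
        exact one_mem _
  have hm : retraction Γ G T m = m := hfix hT
  exact hm ▸ hmap hS

theorem vertexSubgroup_empty : vertexSubgroup Γ G ∅ = ⊥ :=
  eq_bot_iff.2 <| vertexSubgroup_le fun v hv ↦ (Set.notMem_empty v hv).elim

theorem vertexSubgroup_inf_iInf_linkSubgroup_le (S : Set V) {T : Set V} (hT : T.Finite) :
    vertexSubgroup Γ G S ⊓ ⨅ v ∈ T, linkSubgroup Γ G v ≤ vertexSubgroup Γ G (S \ T) := by
  induction T, hT using Set.Finite.induction_on with
  | empty => simp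
  | @insert v T _ _ ih =>
    rw [iInf_insert, inf_left_comm]
    refine (inf_le_inf_left _ ih).trans ((vertexSubgroup_inf_le _ _).trans ?_)
    refine vertexSubgroup_mono ?_
    rintro w ⟨hvw, hwS, hwT⟩
    exact ⟨hwS, fun h ↦ h.elim hvw.ne' hwT⟩

end Basic

section Head

variable {V : Type} {Γ : SimpleGraph V} {G : V → Type} [∀ v, Group (G v)]

variable (Γ G) in
/-- The semidirect product, by the graph product, of the free product of copies of `G v` indexed
by the cosets of the link subgroup. It contains the graph product since the normal closure of
`G v` is the free product of its conjugates by representatives of these cosets. -/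
abbrev CosetSemidirect (v : V) : Type :=
  CoprodI (fun _ : GraphProduct Γ G ⧸ linkSubgroup Γ G v ↦ G v) ⋊[permuteFactors
    (GraphProduct Γ G) (GraphProduct Γ G ⧸ linkSubgroup Γ G v) (G v)] GraphProduct Γ G

variable (Γ G) in
/-- The trivial coset of the link subgroup. -/
abbrev baseCoset (v : V) : GraphProduct Γ G ⧸ linkSubgroup Γ G v :=
  ((1 : GraphProduct Γ G) : GraphProduct Γ G ⧸ linkSubgroup Γ G v)

theorem smul_baseCoset_eq_iff {v : V} {c : GraphProduct Γ G} :
    c • baseCoset Γ G v = baseCoset Γ G v ↔ c ∈ linkSubgroup Γ G v := by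
  rw [← MulAction.mem_stabilizer_iff, MulAction.stabilizer_quotient]

variable (Γ G) in
/-- The embedding of `G v` as the free factor indexed by the coset `x`. -/
abbrev factor (v : V) (x : GraphProduct Γ G ⧸ linkSubgroup Γ G v) :
    G v →* CoprodI (fun _ : GraphProduct Γ G ⧸ linkSubgroup Γ G v ↦ G v) :=
  CoprodI.of (M := fun _ ↦ G v) (i := x)

variable (Γ G) in
open Classical in
/-- The homomorphisms from the vertex groups which induce `toSemidirect`. -/
noncomputable def vertexToSemidirect (v : V) : ∀ u, G u →* CosetSemidirect Γ G v :=
  Function.update (fun _ ↦ SemidirectProduct.inr.comp (of Γ)) v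
    (SemidirectProduct.inl.comp (factor Γ G v (baseCoset Γ G v)))

theorem vertexToSemidirect_self {v : V} (a : G v) : vertexToSemidirect Γ G v v a =
    SemidirectProduct.inl (factor Γ G v (baseCoset Γ G v) a) := by
  classical rw [vertexToSemidirect, Function.update_self, MonoidHom.comp_apply]

theorem vertexToSemidirect_of_ne {u v : V} (huv : u ≠ v) (a : G u) :
    vertexToSemidirect Γ G v u a = SemidirectProduct.inr (of Γ a) := by
  classical rw [vertexToSemidirect, Function.update_of_ne huv, MonoidHom.comp_apply]

theorem commute_vertexToSemidirect_self {u v : V} (hvu : Γ.Adj v u) (a : G v) (b : G u) :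
    Commute (vertexToSemidirect Γ G v v a) (vertexToSemidirect Γ G v u b) := by
  have hb : of Γ b • baseCoset Γ G v = baseCoset Γ G v :=
    smul_baseCoset_eq_iff.2 (of_mem_vertexSubgroup hvu b)
  have hinl := SemidirectProduct.inl_aut (φ := permuteFactors _ _ (G v)) (of Γ b)
    (factor Γ G v (baseCoset Γ G v) a)
  rw [permuteFactors_of, hb, map_inv, eq_mul_inv_iff_mul_eq] at hinl
  rwa [vertexToSemidirect_self, vertexToSemidirect_of_ne hvu.ne']

theorem commute_vertexToSemidirect (v : V) {u w : V} (huw : Γ.Adj u w) (a : G u) (b : G w) :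
    Commute (vertexToSemidirect Γ G v u a) (vertexToSemidirect Γ G v w b) := by
  obtain rfl | hu := eq_or_ne u v
  · exact commute_vertexToSemidirect_self huw a b
  obtain rfl | hw := eq_or_ne w v
  · exact (commute_vertexToSemidirect_self huw.symm b a).symm
  rw [vertexToSemidirect_of_ne hu, vertexToSemidirect_of_ne hw]
  exact (commute_of huw a b).map SemidirectProduct.inr

/-- The homomorphism which maps `G v` to the free factor of the trivial coset, and the other
vertex groups to the acting group. -/
noncomputable def toSemidirect (v : V) : GraphProduct Γ G →* CosetSemidirect Γ G v :=
  lift (vertexToSemidirect Γ G v) fun _ _ ↦ commute_vertexToSemidirect v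

theorem toSemidirect_of_self {v : V} (a : G v) : toSemidirect v (of Γ a) =
    SemidirectProduct.inl (factor Γ G v (baseCoset Γ G v) a) := by
  rw [toSemidirect, lift_of, vertexToSemidirect_self]

theorem toSemidirect_of_of_ne {u v : V} (huv : u ≠ v) (a : G u) :
    toSemidirect v (of Γ a) = SemidirectProduct.inr (of Γ a) := by
  rw [toSemidirect, lift_of, vertexToSemidirect_of_ne huv]

theorem conj_of_eq_of_inv_mul_mem {v : V} {x y : GraphProduct Γ G}
    (h : x⁻¹ * y ∈ linkSubgroup Γ G v) (a : G v) :
    x * of Γ a * x⁻¹ = y * of Γ a * y⁻¹ := by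
  have hcomm := (commute_of_of_mem_linkSubgroup a h).eq
  calc x * of Γ a * x⁻¹ = x * (of Γ a * (x⁻¹ * y)) * y⁻¹ := by group
    _ = y * of Γ a * y⁻¹ := by rw [hcomm]; group

/-- The homomorphism which maps the free factor of a coset to the conjugate of `G v` by a
representative of this coset, and which is the identity on the acting group. -/
noncomputable def ofSemidirect (v : V) : CosetSemidirect Γ G v →* GraphProduct Γ G :=
  SemidirectProduct.lift (CoprodI.lift fun x ↦ (MulAut.conj x.out).toMonoidHom.comp (of Γ))
    (MonoidHom.id _) fun g ↦ CoprodI.ext_hom _ _ fun x ↦ MonoidHom.ext fun a ↦ by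
      have hout : (g * x.out)⁻¹ * (g • x).out ∈ linkSubgroup Γ G v := by
        rw [← QuotientGroup.eq, QuotientGroup.out_eq', ← smul_eq_mul, ← MulAction.Quotient.smul_mk,
          QuotientGroup.out_eq']
      simpa [permuteFactors_of, mul_assoc] using (conj_of_eq_of_inv_mul_mem hout a).symm

theorem ofSemidirect_inl_factor_baseCoset {v : V} (a : G v) :
    ofSemidirect v (SemidirectProduct.inl (factor Γ G v (baseCoset Γ G v) a)) = of Γ a := by
  have hout : (1 : GraphProduct Γ G)⁻¹ * (baseCoset Γ G v).out ∈ linkSubgroup Γ G v := by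
    rw [← QuotientGroup.eq, QuotientGroup.out_eq']
  simpa [ofSemidirect] using (conj_of_eq_of_inv_mul_mem hout a).symm

theorem ofSemidirect_inr {v : V} (g : GraphProduct Γ G) :
    ofSemidirect v (SemidirectProduct.inr g) = g :=
  SemidirectProduct.lift_inr _ _ _ _

theorem ofSemidirect_toSemidirect (v : V) (g : GraphProduct Γ G) :
    ofSemidirect v (toSemidirect v g) = g := by
  refine DFunLike.congr_fun (f := (ofSemidirect v).comp (toSemidirect v)) (g := MonoidHom.id _)
    (hom_ext fun u a ↦ ?_) g
  rw [MonoidHom.comp_apply, MonoidHom.id_apply]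
  obtain rfl | hu := eq_or_ne u v
  · rw [toSemidirect_of_self, ofSemidirect_inl_factor_baseCoset]
  · rw [toSemidirect_of_of_ne hu, ofSemidirect_inr]

/-- The syllable from `G v` with which a reduced expression of `g` can begin, and `1` if there
is none. It is read off from the free product in `CosetSemidirect`. -/
noncomputable def head (v : V) (g : GraphProduct Γ G) : G v :=
  coprodHead (baseCoset Γ G v) (toSemidirect v g).left

theorem head_one (v : V) : head v (1 : GraphProduct Γ G) = 1 := by
  rw [head, map_one, SemidirectProduct.one_left, coprodHead_one]

theorem head_of_mul {v : V} (a : G v) (g : GraphProduct Γ G) :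
    head v (of Γ a * g) = a * head v g := by
  rw [head, map_mul, toSemidirect_of_self, SemidirectProduct.mul_left, SemidirectProduct.left_inl,
    SemidirectProduct.right_inl, map_one, MulAut.one_apply, coprodHead_of_mul, head]

theorem head_mul_of_of_ne {u v : V} (huv : u ≠ v) (g : GraphProduct Γ G) (a : G u) :
    head v (g * of Γ a) = head v g := by
  rw [head, map_mul, toSemidirect_of_of_ne huv, SemidirectProduct.mul_left,
    SemidirectProduct.left_inr, map_one, mul_one, head]

theorem exists_eq_of_mul_of_head_mul_ne {v : V} {g : GraphProduct Γ G} {h : G v}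
    (hne : head v (g * of Γ h) ≠ head v g) :
    ∃ a : G v, ∃ c ∈ linkSubgroup Γ G v, g = of Γ a * c := by
  rw [head, head, map_mul, SemidirectProduct.mul_left, toSemidirect_of_self,
    SemidirectProduct.left_inl, permuteFactors_of] at hne
  obtain ⟨hbase, a, ha⟩ := exists_eq_of_of_coprodHead_mul_ne hne
  refine ⟨a, (toSemidirect v g).right, smul_baseCoset_eq_iff.1 hbase, ?_⟩
  rw [← ofSemidirect_inl_factor_baseCoset (Γ := Γ) a, ← ha, ← ofSemidirect_inr (v := v)
    (toSemidirect v g).right, ← map_mul, SemidirectProduct.inl_left_mul_inr_right,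
    ofSemidirect_toSemidirect]

theorem head_of (v : V) (a : G v) : head v (of Γ a) = a := by
  simpa only [mul_one, head_one] using head_of_mul (Γ := Γ) a 1

theorem head_mul_of_mem {v : V} {S : Set V} (hv : v ∉ S) (g : GraphProduct Γ G)
    {c : GraphProduct Γ G} (hc : c ∈ vertexSubgroup Γ G S) : head v (g * c) = head v g := by
  induction hc using Subgroup.closure_induction_right with
  | one => rw [mul_one]
  | mul_right x _ y hy ih =>
    obtain ⟨u, hu, a, rfl⟩ := hy
    rw [← ih, ← mul_assoc]
    exact head_mul_of_of_ne (ne_of_mem_of_not_mem hu hv) _ a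
  | mul_inv_cancel x _ y hy ih =>
    obtain ⟨u, hu, a, rfl⟩ := hy
    rw [← ih, ← mul_assoc]
    exact map_inv (of Γ) a ▸ head_mul_of_of_ne (ne_of_mem_of_not_mem hu hv) _ a⁻¹

theorem head_of_mem {v : V} {S : Set V} (hv : v ∉ S) {c : GraphProduct Γ G}
    (hc : c ∈ vertexSubgroup Γ G S) : head v c = 1 := by
  rw [← one_mul c, head_mul_of_mem hv 1 hc, head_one]

theorem le_linkSubgroup_of_not_adj {N : Subgroup (GraphProduct Γ G)} (hN : N.Normal)
    {u w : V} [Nontrivial (G w)] (huw : ¬Γ.Adj u w) (h : N ≤ linkSubgroup Γ G u) :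
    N ≤ linkSubgroup Γ G w := by
  -- The head at `w` is trivial on `m` and on its conjugate by `a`, yet equal to `a` on `a * m`.
  intro m hm
  obtain ⟨a, ha⟩ := exists_ne (1 : G w)
  have hmw : head w m = 1 := head_of_mem huw (h hm)
  have hconj : head w (of Γ a * m * (of Γ a)⁻¹) = 1 := head_of_mem huw (h (hN.conj_mem m hm _))
  rw [mul_assoc, head_of_mul, ← map_inv] at hconj
  have hne : head w (m * of Γ a⁻¹) ≠ head w m := fun h ↦
    ha (by rwa [h, hmw, mul_one] at hconj)
  obtain ⟨b, c, hc, rfl⟩ := exists_eq_of_mul_of_head_mul_ne hne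
  rw [head_of_mul, head_of_mem (Γ.loopless.irrefl w) hc, mul_one] at hmw
  rwa [hmw, map_one, one_mul]

end Head

section CayleyGraph

variable {V : Type} {Γ : SimpleGraph V} {G : V → Type} [∀ v, Group (G v)]

variable (Γ G) in
/-- The Cayley graph of the graph product with respect to the elements of all vertex groups. -/
abbrev cayleyGraph : SimpleGraph (GraphProduct Γ G) :=
  mulCayley (⋃ v, Set.range (of Γ (G := G) (v := v)))

theorem cayleyGraph_adj_iff {x y : GraphProduct Γ G} :
    (cayleyGraph Γ G).Adj x y ↔ x ≠ y ∧ ∃ v, ∃ a : G v, x * of Γ a = y := by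
  rw [mulCayley_adj']
  refine and_congr_right fun _ ↦ ⟨?_, ?_⟩
  · rintro ⟨_, hg, h⟩
    obtain ⟨v, a, rfl⟩ := Set.mem_iUnion.1 hg
    obtain h | h := h
    · exact ⟨v, a, h⟩
    · exact ⟨v, a⁻¹, by rw [h, map_inv, mul_inv_cancel_right]⟩
  · rintro ⟨v, a, h⟩
    exact ⟨_, Set.mem_iUnion.2 ⟨v, a, rfl⟩, .inl h⟩

theorem cayleyGraph_preconnected : (cayleyGraph Γ G).Preconnected := by
  refine mulCayley_preconnected (eq_top_iff.2 ?_)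
  rw [← vertexSubgroup_univ]
  exact vertexSubgroup_le fun v _ a ↦ Subgroup.subset_closure (Set.mem_iUnion.2 ⟨v, a, rfl⟩)

theorem head_eq_or_of_adj {x y : GraphProduct Γ G} (hxy : (cayleyGraph Γ G).Adj x y) (v : V) :
    head v x = head v y ∨ ∃ a b : G v, ∃ c ∈ linkSubgroup Γ G v,
      x = of Γ a * c ∧ y = of Γ b * c := by
  obtain ⟨-, u, h, rfl⟩ := cayleyGraph_adj_iff.1 hxy
  obtain rfl | hu := eq_or_ne u v
  · refine or_iff_not_imp_left.2 fun hne ↦ ?_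
    obtain ⟨a, c, hc, rfl⟩ := exists_eq_of_mul_of_head_mul_ne (Ne.symm hne)
    refine ⟨a, a * h, c, hc, rfl, ?_⟩
    rw [map_mul, mul_assoc, mul_assoc, (commute_of_of_mem_linkSubgroup h hc).eq]
  · exact .inl (head_mul_of_of_ne hu x h).symm

theorem head_of_mul_of_mem_linkSubgroup {v : V} (a : G v) {c : GraphProduct Γ G}
    (hc : c ∈ linkSubgroup Γ G v) : head v (of Γ a * c) = a := by
  rw [head_of_mul, head_of_mem (Γ.loopless.irrefl v) hc, mul_one]

theorem preconnected_induce_head_eq_one (v : V) :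
    ((cayleyGraph Γ G).induce {g | head v g = 1}).Preconnected := by
  refine preconnected_induce_of_retraction cayleyGraph_preconnected
    (fun g ↦ of Γ (head v g)⁻¹ * g) (fun g ↦ ?_) (fun g (hg : head v g = 1) ↦ ?_)
    fun x y hxy ↦ ?_
  · rw [Set.mem_ofPred, head_of_mul, inv_mul_cancel]
  · rw [hg, inv_one, map_one, one_mul]
  obtain h | ⟨a, b, c, hc, rfl, rfl⟩ := head_eq_or_of_adj hxy v
  · rw [h]
    exact .inr (mulCayley_adj_mul_iff_right.2 hxy)
  · simp only [head_of_mul_of_mem_linkSubgroup _ hc, map_inv, inv_mul_cancel_left, true_or]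

theorem adj_of_mul_of_mul {v : V} {a b : G v} (hab : a ≠ b) {c : GraphProduct Γ G}
    (hc : c ∈ linkSubgroup Γ G v) : (cayleyGraph Γ G).Adj (of Γ a * c) (of Γ b * c) := by
  refine cayleyGraph_adj_iff.2 ⟨fun h ↦ hab ?_, v, a⁻¹ * b, ?_⟩
  · rw [← head_of_mul_of_mem_linkSubgroup (Γ := Γ) a hc, h, head_of_mul_of_mem_linkSubgroup b hc]
  · rw [mul_assoc, ← (commute_of_of_mem_linkSubgroup _ hc).eq, ← mul_assoc, ← map_mul,
      mul_inv_cancel_left]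

theorem preconnected_induce_head_ne_one (v : V) [Nontrivial (G v)] :
    ((cayleyGraph Γ G).induce {g | head v g = 1}ᶜ).Preconnected := by
  classical
  obtain ⟨b, hb⟩ := exists_ne (1 : G v)
  let p (a : G v) : G v := if a = 1 then b else 1
  have hp (a : G v) : p a * a ≠ 1 := by
    by_cases ha : a = 1 <;> simp [p, ha, hb]
  have hp_of_ne {a : G v} (ha : a ≠ 1) : p a = 1 := if_neg ha
  refine preconnected_induce_of_retraction cayleyGraph_preconnected
    (fun g ↦ of Γ (p (head v g)) * g) (fun g ↦ ?_) (fun g (hg : head v g ≠ 1) ↦ ?_)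
    fun x y hxy ↦ ?_
  · rw [Set.mem_compl_iff, Set.mem_ofPred, head_of_mul]
    exact hp _
  · rw [hp_of_ne hg, map_one, one_mul]
  obtain h | ⟨a, a', c, hc, rfl, rfl⟩ := head_eq_or_of_adj hxy v
  · rw [h]
    exact .inr (mulCayley_adj_mul_iff_right.2 hxy)
  · simp only [head_of_mul_of_mem_linkSubgroup _ hc, ← mul_assoc, ← map_mul]
    obtain h | h := eq_or_ne (p a * a) (p a' * a')
    · exact .inl (congrArg (of Γ · * c) h)
    · exact .inr (adj_of_mul_of_mul h hc)

theorem isHalfSpace_head_eq_one (v : V) [Nontrivial (G v)] :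
    IsHalfSpace (⋃ v, Set.range (of Γ (G := G) (v := v))) (linkSubgroup Γ G v)
      {g | head v g = 1} where
  one_mem := head_one v
  mul_right_mem x c hx hc := (head_mul_of_mem (Γ.loopless.irrefl v) x hc).trans hx
  preconnected := preconnected_induce_head_eq_one v
  preconnected_compl := preconnected_induce_head_ne_one v
  mem_of_adj x y hxy (hx : head v x = 1) (hy : head v y ≠ 1) := by
    obtain h | ⟨a, b, c, hc, rfl, -⟩ := head_eq_or_of_adj hxy v
    · exact (hy (h.symm.trans hx)).elim
    · rw [head_of_mul_of_mem_linkSubgroup a hc] at hx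
      rwa [hx, map_one, one_mul]
  exists_adj_one := by
    obtain ⟨b, hb⟩ := exists_ne (1 : G v)
    have hadj := adj_of_mul_of_mul (Γ := Γ) hb.symm (one_mem (linkSubgroup Γ G v))
    rw [map_one, mul_one, mul_one] at hadj
    exact ⟨of Γ b, hadj, fun h ↦ hb ((head_of v b).symm.trans h)⟩

theorem finiteIndex_linkSubgroup_sup {v w : V} [Nontrivial (G v)] [Nontrivial (G w)]
    (hwv : w ≠ v) (hadj : ¬Γ.Adj v w) {N : Subgroup (GraphProduct Γ G)} (hN : N.Normal) (hfg : N.FG)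
    (hNv : ¬N ≤ linkSubgroup Γ G v) : (linkSubgroup Γ G v ⊔ N).FiniteIndex := by
  obtain ⟨h, hh⟩ := exists_ne (1 : G w)
  obtain ⟨b, hb⟩ := exists_ne (1 : G v)
  have hhead (h : G w) : head v (of Γ h) = 1 := by
    simpa only [one_mul, head_one] using head_mul_of_of_ne hwv (1 : GraphProduct Γ G) h
  have hhL : of Γ h ∉ linkSubgroup Γ G v := fun hL ↦
    hh ((head_of w h).symm.trans (head_of_mem hadj hL))
  refine (isHalfSpace_head_eq_one v).finiteIndex_sup_of_not_le cayleyGraph_preconnected hhL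
    (hhead h) (map_inv (of Γ) h ▸ hhead h⁻¹) (b := of Γ b) ?_ ?_ hN hfg hNv
  · exact fun hb' ↦ hb ((head_of v b).symm.trans hb')
  · rw [← map_inv]
    exact fun hb' ↦ inv_ne_one.2 hb ((head_of v b⁻¹).symm.trans hb')

end CayleyGraph

section Full

variable {V : Type} {Γ : SimpleGraph V} {G : V → Type} [∀ v, Group (G v)]

theorem not_le_linkSubgroup_of_isFullSubgroup [Finite V] [∀ v, Nontrivial (G v)]
    {N : Subgroup (GraphProduct Γ G)} (hN : N.Normal) (hfull : IsFullSubgroup Γ G N) (v : V) :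
    ¬N ≤ linkSubgroup Γ G v := by
  intro hNv
  have hspread (w : V) (hvw : Γᶜ.Reachable v w) : N ≤ linkSubgroup Γ G w := by
    rw [reachable_iff_reflTransGen] at hvw
    induction hvw with
    | refl => exact hNv
    | tail _ hxy ih => exact le_linkSubgroup_of_not_adj hN ((compl_adj _ _ _).1 hxy).2 ih
  obtain ⟨k, ⟨e⟩⟩ := Finite.exists_equiv_fin Γᶜ.ConnectedComponent
  have hS := hfull k _ (isJoinDecomposition_supp Γ e.symm) (e (Γᶜ.connectedComponentMk v))
  rw [e.symm_apply_apply] at hS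
  set S := (Γᶜ.connectedComponentMk v).supp
  refine hS (eq_bot_iff.2 ?_)
  calc N ⊓ vertexSubgroup Γ G S ≤ vertexSubgroup Γ G S ⊓ ⨅ w ∈ S, linkSubgroup Γ G w :=
        le_inf inf_le_right (inf_le_left.trans (le_iInf₂ fun w hw ↦
          hspread w (ConnectedComponent.exact hw).symm))
    _ ≤ vertexSubgroup Γ G (S \ S) := vertexSubgroup_inf_iInf_linkSubgroup_le S S.toFinite
    _ = ⊥ := by rw [Set.sdiff_self, vertexSubgroup_empty]

end Full

section Center

variable {V : Type} {Γ : SimpleGraph V} {G : V → Type} [∀ v, Group (G v)]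

theorem iInf_map_linkSubgroup_le_center {Q : Type*} [Group Q] {f : GraphProduct Γ G →* Q}
    (hf : Function.Surjective f) :
    ⨅ v, (linkSubgroup Γ G v).map f ≤ Subgroup.center Q := by
  intro z hz
  have hcomap : vertexSubgroup Γ G Set.univ ≤ (Subgroup.centralizer {z}).comap f :=
    vertexSubgroup_le fun v _ a ↦ by
      obtain ⟨c, hc, rfl⟩ := Subgroup.mem_iInf.1 hz v
      exact Subgroup.mem_centralizer_singleton_iff.2
        ((commute_of_of_mem_linkSubgroup a hc).map f).eq
  refine Subgroup.mem_center_iff.2 (hf.forall.2 fun g ↦ ?_)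
  exact Subgroup.mem_centralizer_singleton_iff.1
    (hcomap (vertexSubgroup_univ (Γ := Γ) (G := G) ▸ Subgroup.mem_top g))

theorem finiteIndex_center_quotient [Finite V] (N : Subgroup (GraphProduct Γ G)) [N.Normal]
    (h : ∀ v, (linkSubgroup Γ G v ⊔ N).FiniteIndex) :
    (Subgroup.center (GraphProduct Γ G ⧸ N)).FiniteIndex := by
  have hsurj := QuotientGroup.mk'_surjective N
  have hmap (v : V) : ((linkSubgroup Γ G v).map (QuotientGroup.mk' N)).FiniteIndex := by
    refine ⟨?_⟩
    rw [Subgroup.index_map, QuotientGroup.ker_mk', MonoidHom.range_eq_top.2 hsurj,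
      Subgroup.index_top, mul_one]
    exact (h v).index_ne_zero
  have := Subgroup.finiteIndex_iInf hmap
  exact Subgroup.finiteIndex_of_le (iInf_map_linkSubgroup_le_center hsurj)

end Center
end GraphProduct

theorem quotient_of_graph_product_without_central_vertices_by_fg_full_normal_subgroup
    {V : Type} [Fintype V] (Γ : SimpleGraph V) (G : V → Type)
    [∀ v, Group (G v)] [∀ v, Nontrivial (G v)]
    (hnc : ∀ v : V, ¬ IsCentralVertex Γ v)
    (N : Subgroup (GraphProduct Γ G)) [N.Normal]
    (hfg : N.FG) (hfull : IsFullSubgroup Γ G N) :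
    AbelianByFinite (GraphProduct Γ G ⧸ N) ∧ FiniteByAbelian (GraphProduct Γ G ⧸ N) := by
  have hindex (v : V) : (GraphProduct.linkSubgroup Γ G v ⊔ N).FiniteIndex := by
    obtain ⟨w, hwv, hvw⟩ : ∃ w, w ≠ v ∧ ¬Γ.Adj v w := by
      simpa only [IsCentralVertex, not_forall, exists_prop] using hnc v
    exact GraphProduct.finiteIndex_linkSubgroup_sup hwv hvw ‹_› hfg
      (GraphProduct.not_le_linkSubgroup_of_isFullSubgroup ‹_› hfull v)
  have := GraphProduct.finiteIndex_center_quotient N hindex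
  exact ⟨abelianByFinite_of_finiteIndex_center, finiteByAbelian_of_finiteIndex_center⟩
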